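/- Let f : [-π,π] → ℂ^{s×s} belong to L¹([-π,π]; ℂ^{s×s}) and assume f(θ) is a Hermitian matrix for almost every θ. Then the sequence of block Toeplitz matrices {T_n(f)}_n satisfies {T_n(f)}_n ∼_λ f. -/

import Mathlib

open MeasureTheory Filter Topology Matrix
open scoped Real

noncomputable section

/-- Sum of `F` over the eigenvalues (with multiplicity) of a square complex matrix,
the eigenvalues being the roots of the characteristic polynomial. -/
def eigSum {ι : Type*} [Fintype ι] [DecidableEq ι] (F : ℂ → ℂ) (A : Matrix ι ι ℂ) : ℂ :=
  (A.charpoly.roots.map F).sum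

/-- Sum of `F` over the singular values `σ_1, …, σ_{min(#rows,#cols)}` of a rectangular
complex matrix: the singular values are the square roots of the eigenvalues of `A * Aᴴ`,
discarding the `#rows - min(#rows,#cols)` superfluous zero ones. -/
def svSum {m n : Type*} [Fintype m] [Fintype n] [DecidableEq m]
    (F : ℝ → ℂ) (A : Matrix m n ℂ) : ℂ :=
  (∑ i, F (Real.sqrt ((Matrix.isHermitian_mul_conjTranspose_self A).eigenvalues i))) -
    ((Fintype.card m - min (Fintype.card m) (Fintype.card n) : ℕ) : ℂ) * F 0

/-- `{A_n}_n ∼_σ f` : the matrix-sequence `A` is distributed as the matrix-valued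
symbol `f : Ω → ℂ^{ρ×τ}` in the sense of the singular values (Weyl sense). -/
def DistributedSV {Θ : Type*} [MeasureSpace Θ] (Ω : Set Θ)
    {ρ τ : Type*} [Fintype ρ] [Fintype τ] [DecidableEq ρ]
    (f : Θ → Matrix ρ τ ℂ)
    {ι κ : ℕ → Type} [∀ n, Fintype (ι n)] [∀ n, Fintype (κ n)] [∀ n, DecidableEq (ι n)]
    (A : ∀ n, Matrix (ι n) (κ n) ℂ) : Prop :=
  ∀ F : ℝ → ℂ, Continuous F → HasCompactSupport F →
    Tendsto
      (fun n => ((min (Fintype.card (ι n)) (Fintype.card (κ n)) : ℕ) : ℂ)⁻¹ * svSum F (A n))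
      atTop
      (𝓝 (((volume Ω).toReal : ℂ)⁻¹ *
        ∫ θ in Ω, ((min (Fintype.card ρ) (Fintype.card τ) : ℕ) : ℂ)⁻¹ * svSum F (f θ)))

/-- `{A_n}_n ∼_λ f` : the matrix-sequence `A` is distributed as the matrix-valued
symbol `f : Ω → ℂ^{ρ×ρ}` in the sense of the eigenvalues (Weyl sense). -/
def DistributedEig {Θ : Type*} [MeasureSpace Θ] (Ω : Set Θ)
    {ρ : Type*} [Fintype ρ] [DecidableEq ρ]
    (f : Θ → Matrix ρ ρ ℂ)
    {ι : ℕ → Type} [∀ n, Fintype (ι n)] [∀ n, DecidableEq (ι n)]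
    (A : ∀ n, Matrix (ι n) (ι n) ℂ) : Prop :=
  ∀ F : ℂ → ℂ, Continuous F → HasCompactSupport F →
    Tendsto (fun n => ((Fintype.card (ι n) : ℕ) : ℂ)⁻¹ * eigSum F (A n)) atTop
      (𝓝 (((volume Ω).toReal : ℂ)⁻¹ *
        ∫ θ in Ω, ((Fintype.card ρ : ℕ) : ℂ)⁻¹ * eigSum F (f θ)))

/-- `{A_n}_n ∼_σ α I` (constant symbol `α I_s`, `α = 0` being the notion of a
zero-distributed matrix-sequence): the limit of the singular value averages is `F(α)`. -/
def DistributedSVConst (α : ℝ)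
    {ι κ : ℕ → Type} [∀ n, Fintype (ι n)] [∀ n, Fintype (κ n)] [∀ n, DecidableEq (ι n)]
    (A : ∀ n, Matrix (ι n) (κ n) ℂ) : Prop :=
  ∀ F : ℝ → ℂ, Continuous F → HasCompactSupport F →
    Tendsto
      (fun n => ((min (Fintype.card (ι n)) (Fintype.card (κ n)) : ℕ) : ℂ)⁻¹ * svSum F (A n))
      atTop (𝓝 (F α))

/-- `{A_n}_n ∼_λ α I` (constant symbol `α I_s`, `α` real): the limit of the eigenvalue
averages is `F(α)`. -/
def DistributedEigConst (α : ℝ)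
    {ι : ℕ → Type} [∀ n, Fintype (ι n)] [∀ n, DecidableEq (ι n)]
    (A : ∀ n, Matrix (ι n) (ι n) ℂ) : Prop :=
  ∀ F : ℂ → ℂ, Continuous F → HasCompactSupport F →
    Tendsto (fun n => ((Fintype.card (ι n) : ℕ) : ℂ)⁻¹ * eigSum F (A n)) atTop
      (𝓝 (F (α : ℂ)))

/-- The `k`-th Fourier coefficient (computed entrywise) of a matrix-valued function on
`[-π, π]`: `f̂_k = (1/2π) ∫_{-π}^{π} f(θ) e^{-ικθ} dθ`. -/
def fCoeff {ρ τ : Type*} (f : ℝ → Matrix ρ τ ℂ) (k : ℤ) : Matrix ρ τ ℂ :=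
  Matrix.of fun a b =>
    ((2 * π : ℝ) : ℂ)⁻¹ *
      ∫ θ in (-π : ℝ)..π, f θ a b * Complex.exp (-(Complex.I * (k : ℂ) * (θ : ℂ)))

/-- The (rectangular) block Toeplitz matrix `T_{n,n'}(f) = [f̂_{i-j}]`, of size
`sn × tn'` when `f` is `s × t` matrix-valued. -/
def blockToeplitz {ρ τ : Type*} (f : ℝ → Matrix ρ τ ℂ) (n n' : ℕ) :
    Matrix (Fin n × ρ) (Fin n' × τ) ℂ :=
  Matrix.of fun p q => fCoeff f (((p.1 : ℕ) : ℤ) - ((q.1 : ℕ) : ℤ)) p.2 q.2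

section helpers


lemma trig_dense (u : ℝ → ℂ) (hm : Measurable u) (hu : IntegrableOn u (Set.Ioc (-π) π))
    (δ : ℝ) (hδ : 0 < δ) :
    ∃ c : ℤ →₀ ℂ, ∫ θ in Set.Ioc (-π) π,
      ‖u θ - c.sum (fun k a => a * Complex.exp (Complex.I * k * θ))‖ < δ := by
  have : Fact (0 < 2 * π) := ⟨by positivity⟩
  have hIoc : Set.Ioc (-π) (-π + 2 * π) = Set.Ioc (-π) π := by congr 1; ring
  set U : AddCircle (2 * π) → ℂ := AddCircle.liftIoc (2 * π) (-π) u with hU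
  have hUm : Measurable U := by
    exact (hm.comp measurable_subtype_coe).comp (AddCircle.measurableEquivIoc (2 * π) (-π)).measurable
  have hUc : ∀ θ ∈ Set.Ioc (-π) π, U (θ : AddCircle (2 * π)) = u θ := by
    intro θ hθ
    exact AddCircle.liftIoc_coe_apply (by rwa [hIoc])
  have hmp := AddCircle.measurePreserving_mk (2 * π) (-π)
  rw [hIoc] at hmp
  have hUi : Integrable U volume := by
    rw [← hmp.integrable_comp hUm.aestronglyMeasurable]
    refine (integrable_congr ?_).mpr hu
    filter_upwards [ae_restrict_mem measurableSet_Ioc] with θ hθ using hUc θ hθ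
  have hvol := AddCircle.volume_eq_smul_haarAddCircle (T := 2 * π)
  have hUh : Integrable U AddCircle.haarAddCircle := by
    rw [hvol] at hUi
    refine (integrable_smul_measure ?_ ?_).mp hUi
    · simp [Real.pi_pos]
    · exact ENNReal.ofReal_ne_top
  have hmem : hUh.toL1 U ∈ (Submodule.span ℂ (Set.range (@fourierLp (2 * π) _ 1 _))).topologicalClosure := by
    rw [span_fourierLp_closure_eq_top (by simp)]; trivial
  rw [← SetLike.mem_coe, Submodule.topologicalClosure_coe, Metric.mem_closure_iff] at hmem
  obtain ⟨p, hp, hd⟩ := hmem (δ / (2 * π)) (by positivity)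
  rw [SetLike.mem_coe, Finsupp.mem_span_range_iff_exists_finsupp] at hp
  obtain ⟨c, hc⟩ := hp
  refine ⟨c, ?_⟩
  have hpc : (p : AddCircle (2 * π) → ℂ) =ᵐ[AddCircle.haarAddCircle]
      fun x => c.sum (fun k a => a * fourier k x) := by
    rw [← hc, Finsupp.sum]
    refine (Lp.coeFn_finsetSum _ _).trans ?_
    have : ∀ᵐ x ∂(AddCircle.haarAddCircle (T := 2 * π)), ∀ k : ℤ,
        (c k • fourierLp 1 k : Lp ℂ 1 (AddCircle.haarAddCircle (T := 2 * π))) x = c k * fourier k x := by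
      rw [ae_all_iff]
      intro k
      filter_upwards [Lp.coeFn_smul (c k) (fourierLp (T := 2 * π) 1 k), coeFn_fourierLp (T := 2 * π) 1 k] with x h1 h2
      rw [h1, Pi.smul_apply, h2, smul_eq_mul]
    filter_upwards [this] with x hx
    simp only [Finset.sum_apply, Finsupp.sum]
    exact Finset.sum_congr rfl fun k _ => hx k
  rw [dist_eq_norm, L1.norm_eq_integral_norm] at hd
  have h1 : ∫ x, ‖(hUh.toL1 U - p) x‖ ∂(AddCircle.haarAddCircle (T := 2 * π))
      = ∫ x, ‖U x - c.sum (fun k a => a * fourier k x)‖ ∂(AddCircle.haarAddCircle (T := 2 * π)) := by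
    refine integral_congr_ae ?_
    filter_upwards [Lp.coeFn_sub (hUh.toL1 U) p, hUh.coeFn_toL1, hpc] with x h1 h2 h3
    rw [h1, Pi.sub_apply, h2, h3]
  have h2 : ∫ θ in Set.Ioc (-π) π,
      ‖u θ - c.sum (fun k a => a * Complex.exp (Complex.I * k * θ))‖
      = ∫ x, ‖U x - c.sum (fun k a => a * fourier k x)‖ ∂(volume : Measure (AddCircle (2 * π))) := by
    rw [← AddCircle.integral_preimage (2 * π) (-π), hIoc]
    refine setIntegral_congr_fun measurableSet_Ioc fun θ hθ => ?_
    simp only [hUc θ hθ, fourier_coe_apply]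
    congr 2
    refine Finsupp.sum_congr fun k _ => ?_
    congr 2
    push_cast
    field_simp
  rw [h2, hvol, integral_smul_measure, ← h1]
  rw [ENNReal.toReal_ofReal (by positivity), smul_eq_mul]
  rw [lt_div_iff₀ (by positivity)] at hd
  linarith
open scoped Matrix.Norms.L2Operator

def nsq {ι : Type*} [Fintype ι] (x : ι → ℂ) : ℝ := ∑ i, ‖x i‖ ^ 2

lemma nsq_nonneg {ι : Type*} [Fintype ι] (x : ι → ℂ) : 0 ≤ nsq x :=
  Finset.sum_nonneg fun _ _ => by positivity

lemma nsq_eq {ι : Type*} [Fintype ι] (x : ι → ℂ) : nsq x = ‖WithLp.toLp 2 x‖ ^ 2 := by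
  rw [EuclideanSpace.norm_sq_eq]; rfl

lemma nsq_mulVec_le {ι : Type*} [Fintype ι] [DecidableEq ι] (X : Matrix ι ι ℂ) (y : ι → ℂ) :
    nsq (X *ᵥ y) ≤ ‖X‖ ^ 2 * nsq y := by
  rw [nsq_eq, nsq_eq, ← mul_pow]
  have := X.l2_opNorm_mulVec (WithLp.toLp 2 y)
  gcongr
  exact this

lemma opnorm_le {ι : Type*} [Fintype ι] [DecidableEq ι] (X : Matrix ι ι ℂ) (C : ℝ) (hC : 0 ≤ C)
    (h : ∀ y, nsq (X *ᵥ y) ≤ C ^ 2 * nsq y) : ‖X‖ ≤ C := by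
  rw [Matrix.cstar_norm_def]
  refine ContinuousLinearMap.opNorm_le_bound _ hC fun y => ?_
  have := h (WithLp.ofLp y)
  rw [nsq_eq, nsq_eq, ← mul_pow] at this
  exact le_of_sq_le_sq this (by positivity)

lemma star_dot {ι : Type*} [Fintype ι] (x : ι → ℂ) : star x ⬝ᵥ x = (nsq x : ℂ) := by
  simp only [dotProduct, nsq, Pi.star_apply, RCLike.star_def, Complex.ofReal_sum]
  refine Finset.sum_congr rfl fun i _ => ?_
  rw [Complex.conj_mul']; push_cast; rfl

lemma form_le {ι : Type*} [Fintype ι] [DecidableEq ι] (X : Matrix ι ι ℂ) (x y : ι → ℂ) :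
    ‖star x ⬝ᵥ (X *ᵥ y)‖ ≤ ‖X‖ * (√(nsq x) * √(nsq y)) := by
  have h1 : star x ⬝ᵥ (X *ᵥ y) = inner ℂ (WithLp.toLp 2 x) (WithLp.toLp 2 (X *ᵥ y)) := by
    rw [EuclideanSpace.inner_eq_star_dotProduct, dotProduct_comm]
  have h2 := norm_inner_le_norm (𝕜 := ℂ) (WithLp.toLp 2 x) (WithLp.toLp 2 (X *ᵥ y))
  have h3 := X.l2_opNorm_mulVec (WithLp.toLp 2 y)
  rw [h1, nsq_eq, nsq_eq, Real.sqrt_sq (norm_nonneg _), Real.sqrt_sq (norm_nonneg _)]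
  calc _ ≤ _ := h2
    _ ≤ ‖WithLp.toLp 2 x‖ * (‖X‖ * ‖WithLp.toLp 2 y‖) := by gcongr; exact h3
    _ = _ := by ring

lemma nsq_single {ι : Type*} [Fintype ι] [DecidableEq ι] (i : ι) :
    nsq (Pi.single i (1 : ℂ)) = 1 := by
  rw [nsq, Finset.sum_eq_single i]
  · simp
  · intro b _ hb; simp [hb]
  · simp

lemma entry_le {ι : Type*} [Fintype ι] [DecidableEq ι] (X : Matrix ι ι ℂ) (i j : ι) :
    ‖X i j‖ ≤ ‖X‖ := by
  have := form_le X (Pi.single i 1) (Pi.single j 1)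
  rw [nsq_single, nsq_single] at this
  simpa [← Pi.single_star] using this

/-- scalar Fourier coefficient -/
def sc (u : ℝ → ℂ) (k : ℤ) : ℂ :=
  ((2 * π : ℝ) : ℂ)⁻¹ *
      ∫ θ in (-π : ℝ)..π, u θ * Complex.exp (-(Complex.I * (k : ℂ) * (θ : ℂ)))

/-- scalar Toeplitz matrix -/
def tz (u : ℝ → ℂ) (n : ℕ) : Matrix (Fin n) (Fin n) ℂ :=
  Matrix.of fun i j => sc u (((i : ℕ) : ℤ) - ((j : ℕ) : ℤ))

/-- Fourier vector -/
def wv (n : ℕ) (θ : ℝ) : Fin n → ℂ := fun i => Complex.exp (-(Complex.I * ((i : ℕ) : ℂ) * θ))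

lemma norm_exp_aux (r : ℝ) (k : ℝ) : ‖Complex.exp (-(Complex.I * (k : ℂ) * (r : ℂ)))‖ = 1 := by
  rw [Complex.norm_exp]; simp

lemma norm_exp_int (r : ℝ) (k : ℤ) : ‖Complex.exp (-(Complex.I * (k : ℂ) * (r : ℂ)))‖ = 1 := by
  have := norm_exp_aux r k
  simpa using this

lemma nsq_wv (n : ℕ) (θ : ℝ) : nsq (wv n θ) = n := by
  simp only [nsq, wv]
  have : ∀ i : Fin n, ‖Complex.exp (-(Complex.I * ((i : ℕ) : ℂ) * θ))‖ ^ 2 = 1 := fun i => by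
    have := norm_exp_int θ i
    simp only [Int.cast_natCast] at this
    rw [this]; simp
  simp [this]

/-- the quadratic form -/
def QF {n : ℕ} (X : Matrix (Fin n) (Fin n) ℂ) (θ : ℝ) : ℂ := star (wv n θ) ⬝ᵥ (X *ᵥ wv n θ)

lemma QF_le {n : ℕ} (X : Matrix (Fin n) (Fin n) ℂ) (θ : ℝ) : ‖QF X θ‖ ≤ ‖X‖ * n := by
  have := form_le X (wv n θ) (wv n θ)
  rwa [nsq_wv, Real.mul_self_sqrt (by positivity)] at this

lemma QF_eq {n : ℕ} (X : Matrix (Fin n) (Fin n) ℂ) (θ : ℝ) :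
    QF X θ = ∑ j, ∑ i, X j i * Complex.exp (-(Complex.I * ((((i : ℕ) : ℤ) - ((j : ℕ) : ℤ) : ℤ) : ℂ) * θ)) := by
  simp only [QF, dotProduct, mulVec, wv, Finset.mul_sum, Pi.star_apply]
  refine Finset.sum_congr rfl fun j _ => Finset.sum_congr rfl fun i _ => ?_
  rw [RCLike.star_def, ← Complex.exp_conj]
  rw [mul_left_comm, ← Complex.exp_add]
  congr 2
  simp
  ring

lemma QF_cont {n : ℕ} (X : Matrix (Fin n) (Fin n) ℂ) : Continuous (QF X) := by
  have : QF X = _ := funext (QF_eq X)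
  rw [this]; fun_prop

lemma int_mul_exp {u : ℝ → ℂ} (hu : IntervalIntegrable u volume (-π) π) (k : ℤ) :
    IntervalIntegrable (fun θ => u θ * Complex.exp (-(Complex.I * (k : ℂ) * (θ : ℂ)))) volume (-π) π :=
  hu.mul_continuousOn (by fun_prop)

lemma trace_tz {n : ℕ} (X : Matrix (Fin n) (Fin n) ℂ) {u : ℝ → ℂ}
    (hu : IntervalIntegrable u volume (-π) π) :
    (X * tz u n).trace = ((2 * π : ℝ) : ℂ)⁻¹ * ∫ θ in (-π : ℝ)..π, u θ * QF X θ := by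
  have h : ∀ θ, u θ * QF X θ = ∑ j, ∑ i, X j i * (u θ *
      Complex.exp (-(Complex.I * ((((i : ℕ) : ℤ) - ((j : ℕ) : ℤ) : ℤ) : ℂ) * θ))) := by
    intro θ
    rw [QF_eq, Finset.mul_sum]
    refine Finset.sum_congr rfl fun j _ => ?_
    rw [Finset.mul_sum]
    refine Finset.sum_congr rfl fun i _ => ?_
    ring
  simp_rw [h]
  rw [intervalIntegral.integral_finsetSum]
  · simp only [trace, diag_apply, mul_apply, Finset.mul_sum, tz, of_apply]
    refine Finset.sum_congr rfl fun j _ => ?_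
    rw [intervalIntegral.integral_finsetSum, Finset.mul_sum]
    · refine Finset.sum_congr rfl fun i _ => ?_
      rw [intervalIntegral.integral_const_mul, sc]; ring
    · intro i _; exact (int_mul_exp hu _).const_mul _
  · intro j _
    have := IntervalIntegrable.sum (f := fun (i : Fin n) θ => X j i * (u θ *
      Complex.exp (-(Complex.I * ((((i : ℕ) : ℤ) - ((j : ℕ) : ℤ) : ℤ) : ℂ) * θ)))) (μ := volume)
      (a := -π) (b := π) Finset.univ fun i _ => (int_mul_exp hu _).const_mul _
    refine this.congr ?_
    intro θ _
    simp

lemma trace_tz_le {n : ℕ} (X : Matrix (Fin n) (Fin n) ℂ) {u : ℝ → ℂ}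
    (hu : IntervalIntegrable u volume (-π) π) :
    ‖(X * tz u n).trace‖ ≤ ‖X‖ * n * ((2 * π)⁻¹ * ∫ θ in (-π : ℝ)..π, ‖u θ‖) := by
  have hpi : -π ≤ π := by linarith [Real.pi_pos]
  rw [trace_tz X hu, norm_mul]
  have h1 : ‖∫ θ in (-π : ℝ)..π, u θ * QF X θ‖ ≤ ∫ θ in (-π : ℝ)..π, ‖u θ‖ * (‖X‖ * n) := by
    refine (intervalIntegral.norm_integral_le_integral_norm hpi).trans ?_
    refine intervalIntegral.integral_mono_on hpi ?_ ?_ ?_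
    · exact (hu.mul_continuousOn (QF_cont X).continuousOn).norm
    · exact hu.norm.mul_const _
    · intro θ _
      rw [norm_mul]
      gcongr
      exact QF_le X θ
  rw [intervalIntegral.integral_mul_const] at h1
  rw [norm_inv, Complex.norm_real, Real.norm_of_nonneg (by positivity : 0 ≤ 2 * π)]
  calc _ ≤ (2 * π)⁻¹ * ((∫ θ in (-π : ℝ)..π, ‖u θ‖) * (‖X‖ * n)) := by gcongr
    _ = _ := by ring

lemma sc_one (k : ℤ) : sc (fun _ => 1) k = if k = 0 then 1 else 0 := by
  have hpi : (π : ℂ) ≠ 0 := by exact_mod_cast Real.pi_ne_zero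
  simp only [sc, one_mul]
  split_ifs with h
  · subst h
    simp
    field_simp
    norm_num
  · have hk : (-(Complex.I * k) : ℂ) ≠ 0 := by simp [h]
    have := integral_exp_mul_complex (a := -π) (b := π) hk
    have h2 : ∫ θ in (-π : ℝ)..π, Complex.exp (-(Complex.I * (k : ℂ) * (θ : ℂ))) =
       ∫ θ in (-π : ℝ)..π, Complex.exp (-(Complex.I * (k : ℂ)) * (θ : ℂ)) := by
      congr 1; ext θ; congr 1; ring
    rw [h2, this]
    have h3 : Complex.exp (-(Complex.I * k) * π) = Complex.exp (-(Complex.I * k) * (-π : ℝ)) := by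
      rw [Complex.exp_eq_exp_iff_exists_int]
      exact ⟨-k, by push_cast; ring⟩
    rw [h3]; simp

lemma tz_one (n : ℕ) : tz (fun _ => 1) n = 1 := by
  ext i j
  simp only [tz, of_apply, sc_one, one_apply, Fin.ext_iff]
  congr 1
  simp only [eq_iff_iff]; omega

lemma QF_vec {n : ℕ} (x y : Fin n → ℂ) (θ : ℝ) :
    QF (vecMulVec y (star x)) θ = (star (wv n θ) ⬝ᵥ y) * (star x ⬝ᵥ wv n θ) := by
  rw [QF, vecMulVec_mulVec, op_smul_eq_smul, dotProduct_smul, smul_eq_mul, mul_comm]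

lemma QF_vec_self {n : ℕ} (y : Fin n → ℂ) (θ : ℝ) :
    QF (vecMulVec y (star y)) θ = ((‖star y ⬝ᵥ wv n θ‖ ^ 2 : ℝ) : ℂ) := by
  rw [QF_vec, star_dotProduct, RCLike.star_def, Complex.conj_mul']; push_cast; rfl

lemma parseval {n : ℕ} (y : Fin n → ℂ) :
    (2 * π)⁻¹ * ∫ θ in (-π : ℝ)..π, ‖star y ⬝ᵥ wv n θ‖ ^ 2 = nsq y := by
  have h := trace_tz (n := n) (vecMulVec y (star y)) (u := fun _ => 1) (by simp)
  rw [tz_one, mul_one, trace_vecMulVec, dotProduct_comm, star_dot] at h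
  simp only [one_mul, QF_vec_self, intervalIntegral.integral_ofReal] at h
  exact_mod_cast h.symm

lemma tz_form {n : ℕ} {v : ℝ → ℂ} (hv : IntervalIntegrable v volume (-π) π) {M : ℝ}
    (hM : 0 ≤ M) (hvM : ∀ θ, ‖v θ‖ ≤ M) (x y : Fin n → ℂ) :
    ‖star x ⬝ᵥ (tz v n *ᵥ y)‖ ≤ M / 2 * (nsq x + nsq y) := by
  have hpi : -π ≤ π := by linarith [Real.pi_pos]
  have h := trace_tz (n := n) (vecMulVec y (star x)) hv
  have h0 : (vecMulVec y (star x) * tz v n).trace = star x ⬝ᵥ (tz v n *ᵥ y) := by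
    rw [trace_mul_comm, mul_vecMulVec, trace_vecMulVec, dotProduct_comm]
  rw [← h0, h, ← parseval x, ← parseval y, norm_mul]
  have hc : ∀ z : Fin n → ℂ, Continuous fun θ => ‖star z ⬝ᵥ wv n θ‖ ^ 2 := by
    intro z; simp only [dotProduct, wv]; fun_prop
  have h1 : ‖∫ θ in (-π : ℝ)..π, v θ * QF (vecMulVec y (star x)) θ‖ ≤
      ∫ θ in (-π : ℝ)..π, M / 2 * (‖star x ⬝ᵥ wv n θ‖ ^ 2 + ‖star y ⬝ᵥ wv n θ‖ ^ 2) := by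
    refine (intervalIntegral.norm_integral_le_integral_norm hpi).trans ?_
    refine intervalIntegral.integral_mono_on hpi ?_ ?_ ?_
    · exact (hv.mul_continuousOn (QF_cont _).continuousOn).norm
    · exact (((hc x).add (hc y)).const_mul _).intervalIntegrable _ _
    · intro θ _
      rw [norm_mul, QF_vec, norm_mul, star_dotProduct (wv n θ), norm_star]
      have := hvM θ
      have h3 : ‖star y ⬝ᵥ wv n θ‖ * ‖star x ⬝ᵥ wv n θ‖ ≤
        (‖star x ⬝ᵥ wv n θ‖ ^ 2 + ‖star y ⬝ᵥ wv n θ‖ ^ 2) / 2 := by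
          nlinarith [sq_nonneg (‖star y ⬝ᵥ wv n θ‖ - ‖star x ⬝ᵥ wv n θ‖)]
      calc _ ≤ M * ((‖star x ⬝ᵥ wv n θ‖ ^ 2 + ‖star y ⬝ᵥ wv n θ‖ ^ 2) / 2) := by gcongr
        _ = _ := by ring
  rw [intervalIntegral.integral_const_mul, intervalIntegral.integral_add
    ((hc x).intervalIntegrable _ _) ((hc y).intervalIntegrable _ _)] at h1
  rw [norm_inv, Complex.norm_real, Real.norm_of_nonneg (by positivity : 0 ≤ 2 * π)]
  refine (mul_le_mul_of_nonneg_left h1 (by positivity)).trans (le_of_eq ?_)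
  ring

lemma tz_norm {n : ℕ} {v : ℝ → ℂ} (hv : IntervalIntegrable v volume (-π) π) {M : ℝ}
    (hM : 0 < M) (hvM : ∀ θ, ‖v θ‖ ≤ M) : ‖tz v n‖ ≤ M := by
  refine opnorm_le _ _ hM.le fun y => ?_
  have h := tz_form hv hM.le hvM (((M⁻¹ : ℝ) : ℂ) • (tz v n *ᵥ y)) y
  set T := tz v n *ᵥ y
  have h1 : nsq (((M⁻¹ : ℝ) : ℂ) • T) = (M⁻¹) ^ 2 * nsq T := by
    simp only [nsq, Pi.smul_apply, norm_smul, mul_pow, Complex.norm_real, Finset.mul_sum]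
    simp
  rw [h1, star_smul, smul_dotProduct, star_dot, norm_smul, Complex.norm_real,
    Real.norm_of_nonneg (nsq_nonneg _), RCLike.star_def, Complex.conj_ofReal, Complex.norm_real,
    Real.norm_of_nonneg (by positivity)] at h
  have : M * (M⁻¹ * nsq T) ≤ M * (M / 2 * (M⁻¹ ^ 2 * nsq T + nsq y)) := by gcongr
  field_simp at this
  nlinarith

/-- exponential -/
def ek (k : ℤ) (θ : ℝ) : ℂ := Complex.exp (Complex.I * k * θ)

lemma ek_cont (k : ℤ) : Continuous (ek k) := by unfold ek; fun_prop

lemma ek_norm (k : ℤ) (θ : ℝ) : ‖ek k θ‖ = 1 := by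
  have := norm_exp_int θ (-k)
  unfold ek
  convert! this using 3
  push_cast; ring

lemma sc_ek_mul (v : ℝ → ℂ) (k m : ℤ) : sc (fun θ => ek k θ * v θ) m = sc v (m - k) := by
  simp only [sc, ek]
  congr 2
  ext θ
  rw [mul_comm (Complex.exp _) (v θ), mul_assoc, ← Complex.exp_add]
  congr 2
  push_cast; ring

lemma sc_ek (k m : ℤ) : sc (ek k) m = if m = k then 1 else 0 := by
  have := sc_ek_mul (fun _ => 1) k m
  simp only [mul_one, sc_one, sub_eq_zero] at this
  exact this

lemma shift_err {n : ℕ} (v : ℝ → ℂ) (k : ℤ) (i j : Fin n) :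
    (tz (fun θ => ek k θ * v θ) n - tz (ek k) n * tz v n) i j =
      if 0 ≤ (i : ℤ) - k ∧ (i : ℤ) - k < n then 0 else tz (fun θ => ek k θ * v θ) n i j := by
  simp only [Matrix.sub_apply, mul_apply, tz, of_apply, sc_ek, sc_ek_mul, ite_mul, one_mul, zero_mul]
  split_ifs with h
  · rw [Finset.sum_eq_single (⟨((i : ℤ) - k).toNat, by omega⟩ : Fin n)]
    · rw [if_pos (by simp; omega), sub_eq_zero]
      congr 1
      simp; omega
    · intro b _ hb
      rw [if_neg]
      intro h2
      apply hb
      ext; simp; omega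
    · simp
  · rw [Finset.sum_eq_zero, sub_zero]
    intro b _
    rw [if_neg]
    have := b.2
    omega

lemma bad_card (n : ℕ) (k : ℤ) :
    (Finset.univ.filter fun i : Fin n => ¬ (0 ≤ (i : ℤ) - k ∧ (i : ℤ) - k < n)).card ≤ k.natAbs := by
  rw [← Finset.card_range k.natAbs]
  refine Finset.card_le_card_of_injOn (fun i => if 0 ≤ k then (i : ℕ) else n - 1 - i) ?_ ?_
  · intro i hi
    have := i.2
    simp only [Finset.coe_filter, Finset.mem_univ, true_and, Set.mem_ofPred_eq] at hi
    simp only [Finset.coe_range, Set.mem_Iio]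
    split_ifs <;> omega
  · intro i _ j _ hij
    have := i.2
    have := j.2
    simp only at hij
    ext
    split_ifs at hij <;> omega

/-- the error functional -/
def DF {n : ℕ} (X : Matrix (Fin n) (Fin n) ℂ) (u v : ℝ → ℂ) : ℂ :=
  (X * (tz (fun θ => u θ * v θ) n - tz u n * tz v n)).trace

lemma bdd_int {v : ℝ → ℂ} (hv : Measurable v) {M : ℝ} (hvM : ∀ θ, ‖v θ‖ ≤ M) :
    IntervalIntegrable v volume (-π) π := by
  rw [intervalIntegrable_iff]
  exact Measure.integrableOn_of_bounded (M := M) (by simp) hv.aestronglyMeasurable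
    (Filter.Eventually.of_forall hvM)

lemma mul_int {u v : ℝ → ℂ} (hu : IntervalIntegrable u volume (-π) π) (hv : Measurable v) {M : ℝ}
    (hvM : ∀ θ, ‖v θ‖ ≤ M) :
    IntervalIntegrable (fun θ => u θ * v θ) volume (-π) π := by
  rw [intervalIntegrable_iff] at *
  exact hu.mul_bdd hv.aestronglyMeasurable (Filter.Eventually.of_forall hvM)

lemma DF_ek {n : ℕ} (X : Matrix (Fin n) (Fin n) ℂ) {v : ℝ → ℂ} (hv : Measurable v) {M : ℝ}
    (hM : 0 < M) (hvM : ∀ θ, ‖v θ‖ ≤ M) (k : ℤ) :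
    ‖DF X (ek k) v‖ ≤ k.natAbs * (M * ‖X‖) := by
  have hT : ‖tz (fun θ => ek k θ * v θ) n‖ ≤ M := by
    refine tz_norm (mul_int ((ek_cont k).intervalIntegrable _ _) hv hvM) hM fun θ => ?_
    rw [norm_mul, ek_norm, one_mul]; exact hvM θ
  rw [DF, trace_mul_comm]
  have : ((tz (fun θ => ek k θ * v θ) n - tz (ek k) n * tz v n) * X).trace =
    ∑ i ∈ Finset.univ.filter (fun i : Fin n => ¬ (0 ≤ (i : ℤ) - k ∧ (i : ℤ) - k < n)),
      (tz (fun θ => ek k θ * v θ) n * X) i i := by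
    rw [Finset.sum_filter]
    simp only [trace, diag_apply]
    refine Finset.sum_congr rfl fun i _ => ?_
    rw [mul_apply]
    simp only [shift_err]
    split_ifs with h
    · simp
    · rw [mul_apply]
  rw [this]
  refine (norm_sum_le _ _).trans ?_
  refine (Finset.sum_le_card_nsmul _ _ (M * ‖X‖) ?_).trans ?_
  · intro i _
    refine (entry_le _ i i).trans ((norm_mul_le _ _).trans ?_)
    gcongr
  · rw [nsmul_eq_mul]
    gcongr
    exact bad_card n k

lemma tz_add {n : ℕ} {u v : ℝ → ℂ} (hu : IntervalIntegrable u volume (-π) π)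
    (hv : IntervalIntegrable v volume (-π) π) : tz (fun θ => u θ + v θ) n = tz u n + tz v n := by
  ext i j
  simp only [tz, of_apply, Matrix.add_apply, sc, add_mul]
  rw [intervalIntegral.integral_add (int_mul_exp hu _) (int_mul_exp hv _), mul_add]

lemma tz_smul {n : ℕ} (c : ℂ) (u : ℝ → ℂ) : tz (fun θ => c * u θ) n = c • tz u n := by
  ext i j
  simp only [tz, of_apply, Matrix.smul_apply, sc, mul_assoc, smul_eq_mul]
  rw [intervalIntegral.integral_const_mul]; ring

lemma DF_add {n : ℕ} (X : Matrix (Fin n) (Fin n) ℂ) {u u' v : ℝ → ℂ}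
    (hu : IntervalIntegrable u volume (-π) π) (hu' : IntervalIntegrable u' volume (-π) π)
    (hv : Measurable v) {M : ℝ} (hvM : ∀ θ, ‖v θ‖ ≤ M) :
    DF X (fun θ => u θ + u' θ) v = DF X u v + DF X u' v := by
  simp only [DF, add_mul]
  rw [tz_add hu hu', tz_add (mul_int hu hv hvM) (mul_int hu' hv hvM), ← trace_add, ← mul_add]
  congr 2
  rw [add_mul]; abel

lemma DF_smul {n : ℕ} (X : Matrix (Fin n) (Fin n) ℂ) (c : ℂ) (u v : ℝ → ℂ) :
    DF X (fun θ => c * u θ) v = c * DF X u v := by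
  simp only [DF, mul_assoc]
  rw [tz_smul, tz_smul, ← smul_eq_mul c, ← trace_smul, smul_mul_assoc, ← smul_sub, mul_smul_comm]

lemma DF_zero {n : ℕ} (X : Matrix (Fin n) (Fin n) ℂ) (v : ℝ → ℂ) :
    DF X (fun _ => 0) v = 0 := by
  have := DF_smul X 0 (fun _ => 0) v
  simpa using this

lemma sum_ek_int (s : Finset ℤ) (c : ℤ → ℂ) :
    IntervalIntegrable (fun θ => ∑ k ∈ s, c k * ek k θ) volume (-π) π := by
  apply Continuous.intervalIntegrable
  exact continuous_finsetSum _ fun k _ => (ek_cont k).const_mul _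

lemma DF_sum {n : ℕ} (X : Matrix (Fin n) (Fin n) ℂ) {v : ℝ → ℂ}
    (hv : Measurable v) {M : ℝ} (hM : 0 < M) (hvM : ∀ θ, ‖v θ‖ ≤ M) (s : Finset ℤ) (c : ℤ → ℂ) :
    ‖DF X (fun θ => ∑ k ∈ s, c k * ek k θ) v‖ ≤ (∑ k ∈ s, ‖c k‖ * k.natAbs) * (M * ‖X‖) := by
  induction s using Finset.induction_on with
  | empty => simp [DF_zero]
  | insert a s ha ih =>
    simp only [Finset.sum_insert ha]
    rw [DF_add X (((ek_cont a).const_mul _).intervalIntegrable _ _) (sum_ek_int s c) hv hvM,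
      DF_smul, add_mul]
    refine (norm_add_le _ _).trans (add_le_add ?_ ih)
    rw [norm_mul, mul_assoc]
    gcongr
    exact DF_ek X hv hM hvM a

lemma DF_bound {n : ℕ} (X : Matrix (Fin n) (Fin n) ℂ) {u v : ℝ → ℂ}
    (hu : IntervalIntegrable u volume (-π) π)
    (hv : Measurable v) {M : ℝ} (hM : 0 < M) (hvM : ∀ θ, ‖v θ‖ ≤ M) :
    ‖DF X u v‖ ≤ 2 * M * ‖X‖ * n * ((2 * π)⁻¹ * ∫ θ in (-π : ℝ)..π, ‖u θ‖) := by
  have hpi : -π ≤ π := by linarith [Real.pi_pos]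
  have hi : 0 ≤ ∫ θ in (-π : ℝ)..π, ‖u θ‖ :=
    intervalIntegral.integral_nonneg hpi fun _ _ => norm_nonneg _
  have h1 : ∫ θ in (-π : ℝ)..π, ‖u θ * v θ‖ ≤ (∫ θ in (-π : ℝ)..π, ‖u θ‖) * M := by
    rw [← intervalIntegral.integral_mul_const]
    refine intervalIntegral.integral_mono_on hpi (mul_int hu hv hvM).norm (hu.norm.mul_const _) ?_
    intro θ _
    rw [norm_mul]; gcongr; exact hvM θ
  have hT := tz_norm (n := n) (bdd_int hv hvM) hM hvM
  rw [DF, mul_sub, trace_sub]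
  refine (norm_sub_le _ _).trans ?_
  have h2 := trace_tz_le X (mul_int hu hv hvM)
  have h3 := trace_tz_le (tz v n * X) hu
  have h4 : (X * (tz u n * tz v n)).trace = (tz v n * X * tz u n).trace := by
    rw [← mul_assoc, trace_mul_comm, mul_assoc]
  rw [h4]
  have h5 : ‖tz v n * X‖ ≤ M * ‖X‖ := (norm_mul_le _ _).trans (by gcongr)
  calc _ ≤ ‖X‖ * n * ((2 * π)⁻¹ * ((∫ θ in (-π : ℝ)..π, ‖u θ‖) * M)) +
      M * ‖X‖ * n * ((2 * π)⁻¹ * ∫ θ in (-π : ℝ)..π, ‖u θ‖) := by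
        refine add_le_add (h2.trans ?_) (h3.trans ?_)
        · gcongr
        · gcongr
    _ = _ := by ring

lemma DF_tendsto (X : ∀ n, Matrix (Fin n) (Fin n) ℂ) {C : ℝ} (hC : ∀ n, ‖X n‖ ≤ C) {u v : ℝ → ℂ}
    (hum : Measurable u) (hu : IntervalIntegrable u volume (-π) π)
    (hv : Measurable v) {M : ℝ} (hM : 0 < M) (hvM : ∀ θ, ‖v θ‖ ≤ M) :
    Tendsto (fun n : ℕ => (n : ℂ)⁻¹ * DF (X n) u v) atTop (𝓝 0) := by
  have hpi : -π ≤ π := by linarith [Real.pi_pos]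
  have hC0 : 0 ≤ C := (norm_nonneg _).trans (hC 0)
  rw [Metric.tendsto_atTop]
  intro ε hε
  set L : ℝ := 2 * M * C * (2 * π)⁻¹ + 1
  have hL : 0 < L := by positivity
  obtain ⟨c, hc⟩ := trig_dense u hum ((intervalIntegrable_iff_integrableOn_Ioc_of_le hpi).mp hu)
    (ε / 2 / L) (by positivity)
  rw [← intervalIntegral.integral_of_le hpi] at hc
  set p : ℝ → ℂ := fun θ => ∑ k ∈ c.support, c k * ek k θ with hp
  have hc' : ∫ θ in (-π : ℝ)..π, ‖u θ - p θ‖ < ε / 2 / L := hc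
  have hpint : IntervalIntegrable p volume (-π) π := sum_ek_int _ _
  set K : ℝ := (∑ k ∈ c.support, ‖c k‖ * k.natAbs) * (M * C) with hK
  obtain ⟨N, hN⟩ := exists_nat_gt (K / (ε / 2))
  refine ⟨N + 1, fun n hn => ?_⟩
  have hn0 : (0 : ℝ) < n := by exact_mod_cast (by omega : 0 < n)
  have hNn : (N : ℝ) ≤ n := by exact_mod_cast (by omega : N ≤ n)
  have hsplit : DF (X n) u v = DF (X n) (fun θ => u θ - p θ) v + DF (X n) p v := by
    rw [← DF_add (X n) (hu.sub hpint) hpint hv hvM]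
    simp
  have h1 : ‖DF (X n) (fun θ => u θ - p θ) v‖ ≤ n * (ε / 2) := by
    refine (DF_bound (X n) (hu.sub hpint) hv hM hvM).trans ?_
    calc _ ≤ 2 * M * C * n * ((2 * π)⁻¹ * (ε / 2 / L)) := by
          have := hC n
          have h0 : 0 ≤ ∫ θ in (-π : ℝ)..π, ‖u θ - p θ‖ :=
            intervalIntegral.integral_nonneg hpi fun _ _ => norm_nonneg _
          gcongr
      _ = n * ((2 * M * C * (2 * π)⁻¹) / L * (ε / 2)) := by ring
      _ ≤ n * (1 * (ε / 2)) := by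
          gcongr
          rw [div_le_one hL]
          simp [L]
      _ = _ := by ring
  have h2 : ‖DF (X n) p v‖ ≤ K := by
    refine (DF_sum (X n) hv hM hvM _ _).trans ?_
    rw [hK]
    have := hC n
    gcongr
  rw [dist_zero_right, norm_mul, norm_inv, Complex.norm_natCast, hsplit]
  rw [inv_mul_lt_iff₀ hn0]
  refine (norm_add_le _ _).trans_lt ?_
  have h3 : K < n * (ε / 2) := by
    rw [div_lt_iff₀ (by positivity)] at hN
    nlinarith
  linarith

/-- resolvent -/
def rs {ι : Type*} [Fintype ι] [DecidableEq ι] (A : Matrix ι ι ℂ) (z : ℂ) : Matrix ι ι ℂ :=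
  (A - z • (1 : Matrix ι ι ℂ))⁻¹

lemma eigSum_herm {ι : Type*} [Fintype ι] [DecidableEq ι] (F : ℂ → ℂ) {A : Matrix ι ι ℂ}
    (hA : A.IsHermitian) : eigSum F A = ∑ i, F (hA.eigenvalues i) := by
  rw [eigSum, hA.roots_charpoly_eq_eigenvalues]
  simp

lemma sub_ne {z : ℂ} (hz : z.im ≠ 0) (x : ℝ) : (x : ℂ) - z ≠ 0 := by
  intro h
  apply hz
  have := congrArg Complex.im h
  simpa using this

lemma norm_sub_inv {z : ℂ} (hz : z.im ≠ 0) (x : ℝ) : ‖((x : ℂ) - z)⁻¹‖ ≤ |z.im|⁻¹ := by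
  rw [norm_inv]
  have h : 0 < |z.im| := abs_pos.mpr hz
  gcongr
  have := Complex.abs_im_le_norm ((x : ℂ) - z)
  simpa using this

lemma rs_spec {ι : Type*} [Fintype ι] [DecidableEq ι] {A : Matrix ι ι ℂ}
    (hA : A.IsHermitian) {z : ℂ} (hz : z.im ≠ 0) :
    (A - z • (1 : Matrix ι ι ℂ)) * rs A z = 1 ∧ rs A z * (A - z • (1 : Matrix ι ι ℂ)) = 1 ∧
    ‖rs A z‖ ≤ |z.im|⁻¹ ∧ (rs A z).trace = ∑ i, ((hA.eigenvalues i : ℂ) - z)⁻¹ := by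
  set U := hA.eigenvectorUnitary
  set D : Matrix ι ι ℂ := diagonal fun i => ((hA.eigenvalues i : ℂ) - z)⁻¹ with hD
  set D' : Matrix ι ι ℂ := diagonal fun i => ((hA.eigenvalues i : ℂ) - z) with hD'
  have hDD : D' * D = 1 := by
    rw [hD, hD', diagonal_mul_diagonal, ← diagonal_one]
    congr 1
    ext i
    exact mul_inv_cancel₀ (sub_ne hz _)
  have hUU : (U : Matrix ι ι ℂ) * star (U : Matrix ι ι ℂ) = 1 := Unitary.coe_mul_star_self U
  have hUU' : star (U : Matrix ι ι ℂ) * (U : Matrix ι ι ℂ) = 1 := Unitary.coe_star_mul_self U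
  have hAz : A - z • (1 : Matrix ι ι ℂ) = U * D' * star (U : Matrix ι ι ℂ) := by
    have h1 : D' = diagonal (RCLike.ofReal ∘ hA.eigenvalues) - z • (1 : Matrix ι ι ℂ) := by
      rw [hD', ← diagonal_one, ← diagonal_smul, diagonal_sub]
      congr 1
      ext i; simp
    have h2 := hA.spectral_theorem
    rw [Unitary.conjStarAlgAut_apply] at h2
    rw [h1, mul_sub, sub_mul, ← h2, mul_smul_comm, smul_mul_assoc, mul_one, hUU]
  have hprod : (A - z • (1 : Matrix ι ι ℂ)) * (U * D * star (U : Matrix ι ι ℂ)) = 1 := by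
    rw [hAz]
    calc _ = U * D' * (star (U : Matrix ι ι ℂ) * U) * D * star (U : Matrix ι ι ℂ) := by
          simp only [mul_assoc]
      _ = 1 := by rw [hUU', mul_one, mul_assoc (U : Matrix ι ι ℂ), hDD, mul_one, hUU]
  have hrs : rs A z = U * D * star (U : Matrix ι ι ℂ) := inv_eq_right_inv hprod
  refine ⟨by rw [hrs, hprod], by rw [hrs]; exact mul_eq_one_comm.mp hprod, ?_, ?_⟩
  · rw [hrs, ← Unitary.coe_star, CStarRing.norm_mul_coe_unitary, CStarRing.norm_coe_unitary_mul,
      l2_opNorm_diagonal]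
    rw [pi_norm_le_iff_of_nonneg (by positivity)]
    exact fun i => norm_sub_inv hz _
  · rw [hrs, trace_mul_comm, ← mul_assoc, hUU', one_mul, hD, trace_diagonal]

/-- block -/
def blk {n s : ℕ} (X : Matrix (Fin n × Fin s) (Fin n × Fin s) ℂ) (b a : Fin s) :
    Matrix (Fin n) (Fin n) ℂ := Matrix.of fun i j => X (i, b) (j, a)

lemma blk_norm {n s : ℕ} (X : Matrix (Fin n × Fin s) (Fin n × Fin s) ℂ) (b a : Fin s) :
    ‖blk X b a‖ ≤ ‖X‖ := by
  refine opnorm_le _ _ (norm_nonneg _) fun y => ?_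
  set Y : Fin n × Fin s → ℂ := fun q => if q.2 = a then y q.1 else 0 with hY
  have h := nsq_mulVec_le X Y
  have h1 : nsq Y = nsq y := by
    simp only [nsq, hY, Fintype.sum_prod_type]
    refine Finset.sum_congr rfl fun i _ => ?_
    rw [Finset.sum_eq_single a] <;> simp +contextual
  have h2 : ∀ i, (blk X b a *ᵥ y) i = (X *ᵥ Y) (i, b) := by
    intro i
    simp only [mulVec, dotProduct, hY, Fintype.sum_prod_type, blk, of_apply]
    refine Finset.sum_congr rfl fun j _ => ?_
    rw [Finset.sum_eq_single a] <;> simp +contextual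
  rw [h1] at h
  refine le_trans ?_ h
  simp only [nsq, h2, Fintype.sum_prod_type]
  refine Finset.sum_le_sum fun i _ => ?_
  exact Finset.single_le_sum (f := fun x => ‖(X *ᵥ Y) (i, x)‖ ^ 2) (fun _ _ => by positivity)
    (Finset.mem_univ b)

lemma trace_blk {n s : ℕ} (X Y : Matrix (Fin n × Fin s) (Fin n × Fin s) ℂ) :
    (X * Y).trace = ∑ b, ∑ a, (blk X b a * blk Y a b).trace := by
  simp only [trace, diag_apply, Matrix.mul_apply, Fintype.sum_prod_type, blk, of_apply]
  rw [Finset.sum_comm]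
  refine Finset.sum_congr rfl fun b _ => ?_
  refine (Finset.sum_congr rfl fun j _ => ?_).trans Finset.sum_comm
  rw [Finset.sum_comm]

lemma bt_apply {s n : ℕ} (f : ℝ → Matrix (Fin s) (Fin s) ℂ) (p q : Fin n × Fin s) :
    blockToeplitz f n n p q = tz (fun θ => f θ p.2 q.2) n p.1 q.1 := rfl

lemma bt_herm {s n : ℕ} {f : ℝ → Matrix (Fin s) (Fin s) ℂ} (hf : ∀ θ, (f θ).IsHermitian) :
    (blockToeplitz f n n).IsHermitian := by
  have hpi : -π ≤ π := by linarith [Real.pi_pos]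
  ext p q
  rw [conjTranspose_apply, bt_apply, bt_apply]
  simp only [tz, of_apply, sc, intervalIntegral.integral_of_le hpi, RCLike.star_def]
  rw [map_mul, map_inv₀, Complex.conj_ofReal, ← integral_conj]
  congr 2
  ext θ
  rw [map_mul, ← Complex.exp_conj]
  congr 1
  · exact (hf θ).apply p.2 q.2
  · congr 1
    simp
    ring

lemma meas_inv {Ω : Type*} [MeasurableSpace Ω] {s : ℕ} {g : Ω → Matrix (Fin s) (Fin s) ℂ}
    (hg : ∀ a b, Measurable fun ω => g ω a b) (a b : Fin s) : Measurable fun ω => (g ω)⁻¹ a b := by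
  have hG : Measurable (fun ω => (fun a b => g ω a b : Fin s → Fin s → ℂ)) :=
    measurable_pi_lambda _ fun a => measurable_pi_lambda _ fun b => hg a b
  have h1 : Continuous fun M : Fin s → Fin s → ℂ => (Matrix.of M).det :=
    Continuous.matrix_det continuous_id
  have h2 : Continuous fun M : Fin s → Fin s → ℂ => (Matrix.of M).adjugate a b :=
    (Continuous.matrix_adjugate continuous_id).matrix_elem a b
  simp only [inv_def, Ring.inverse_eq_inv', Matrix.smul_apply, smul_eq_mul]
  exact ((h1.measurable.comp hG).inv).mul (h2.measurable.comp hG)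

lemma tz_sum {n : ℕ} {κ : Type*} (S : Finset κ) {u : κ → ℝ → ℂ}
    (hu : ∀ k, IntervalIntegrable (u k) volume (-π) π) :
    tz (fun θ => ∑ k ∈ S, u k θ) n = ∑ k ∈ S, tz (u k) n := by
  ext i j
  simp only [tz, of_apply, Matrix.sum_apply, sc, Finset.sum_mul]
  rw [intervalIntegral.integral_finsetSum fun k _ => int_mul_exp (hu k) _, Finset.mul_sum]

lemma err_entry {s n : ℕ} {f : ℝ → Matrix (Fin s) (Fin s) ℂ}
    (hf : ∀ i j, IntervalIntegrable (fun θ => f θ i j) volume (-π) π)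
    {r : ℝ → Matrix (Fin s) (Fin s) ℂ} {M : ℝ} (hr : ∀ a b, Measurable fun θ => r θ a b)
    (hrM : ∀ θ a b, ‖r θ a b‖ ≤ M) {z : ℂ}
    (hfr : ∀ θ, (f θ - z • (1 : Matrix (Fin s) (Fin s) ℂ)) * r θ = 1) (p q : Fin n × Fin s) :
    (1 - (blockToeplitz f n n - z • 1) * blockToeplitz r n n) p q =
      ∑ c, (tz (fun θ => f θ p.2 c * r θ c q.2) n -
        tz (fun θ => f θ p.2 c) n * tz (fun θ => r θ c q.2) n) p.1 q.1 := by
  obtain ⟨i, a⟩ := p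
  obtain ⟨j, b⟩ := q
  have h1 : ∀ θ, ∑ c, f θ a c * r θ c b = (if a = b then 1 else 0) * 1 + z * r θ a b := by
    intro θ
    have := congrFun (congrFun (hfr θ) a) b
    rw [sub_mul, smul_mul_assoc, one_mul, Matrix.sub_apply, Matrix.smul_apply, mul_apply,
      one_apply, smul_eq_mul] at this
    rw [mul_one, ← this]; ring
  have h2 : ∑ c, tz (fun θ => f θ a c * r θ c b) n = (if a = b then (1 : ℂ) else 0) • (1 : Matrix (Fin n) (Fin n) ℂ) +
      z • tz (fun θ => r θ a b) n := by
    rw [← tz_sum Finset.univ fun c => mul_int (hf a c) (hr c b) (fun θ => hrM θ c b)]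
    simp_rw [h1]
    rw [tz_add (by simp) ((bdd_int (hr a b) fun θ => hrM θ a b).const_mul _), tz_smul, tz_smul, tz_one]
  simp only [Matrix.sub_apply]
  rw [Finset.sum_sub_distrib, ← Matrix.sum_apply, h2, sub_mul, smul_mul_assoc, one_mul]
  simp only [Matrix.sub_apply, Matrix.add_apply, Matrix.smul_apply, smul_eq_mul, one_apply, bt_apply,
    Prod.mk.injEq, mul_apply, Fintype.sum_prod_type]
  rw [Finset.sum_comm]
  have : (if i = j ∧ a = b then (1 : ℂ) else 0) = (if a = b then 1 else 0) * (if i = j then 1 else 0) := by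
    by_cases ha : a = b <;> by_cases hi : i = j <;> simp [ha, hi]
  rw [this]; ring

lemma trace_bt {s n : ℕ} {r : ℝ → Matrix (Fin s) (Fin s) ℂ}
    (hr : ∀ a b, IntervalIntegrable (fun θ => r θ a b) volume (-π) π) :
    (blockToeplitz r n n).trace = n * (((2 * π : ℝ) : ℂ)⁻¹ * ∫ θ in (-π : ℝ)..π, (r θ).trace) := by
  simp only [trace, diag_apply, bt_apply, Fintype.sum_prod_type, tz, of_apply, sub_self, sc]
  rw [intervalIntegral.integral_finsetSum fun k _ => hr k k, Finset.mul_sum]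
  simp

lemma resolvent_limit (s : ℕ) {f : ℝ → Matrix (Fin s) (Fin s) ℂ}
    (hfm : ∀ a b, Measurable fun θ => f θ a b)
    (hf : ∀ i j, IntervalIntegrable (fun θ => f θ i j) volume (-π) π)
    (hherm : ∀ θ, (f θ).IsHermitian) {z : ℂ} (hz : z.im ≠ 0) :
    Tendsto (fun n : ℕ => (n : ℂ)⁻¹ * (rs (blockToeplitz f n n) z).trace) atTop
      (𝓝 (((2 * π : ℝ) : ℂ)⁻¹ * ∫ θ in (-π : ℝ)..π, (rs (f θ) z).trace)) := by
  set M : ℝ := |z.im|⁻¹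
  have hM : 0 < M := inv_pos.mpr (abs_pos.mpr hz)
  set r : ℝ → Matrix (Fin s) (Fin s) ℂ := fun θ => rs (f θ) z with hrdef
  have hr : ∀ a b, Measurable fun θ => r θ a b := by
    refine meas_inv fun a b => ?_
    simp only [Matrix.sub_apply]
    exact (hfm a b).sub measurable_const
  have hrM : ∀ θ a b, ‖r θ a b‖ ≤ M := fun θ a b =>
    (entry_le _ a b).trans (rs_spec (hherm θ) hz).2.2.1
  have hfr : ∀ θ, (f θ - z • (1 : Matrix (Fin s) (Fin s) ℂ)) * r θ = 1 :=
    fun θ => (rs_spec (hherm θ) hz).1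
  have key : ∀ n : ℕ, (rs (blockToeplitz f n n) z).trace = (blockToeplitz r n n).trace +
      ∑ b, ∑ a, ∑ c, DF (blk (rs (blockToeplitz f n n) z) b a) (fun θ => f θ a c) (fun θ => r θ c b) := by
    intro n
    set R := rs (blockToeplitz f n n) z with hR
    have h1 : R = blockToeplitz r n n + R * (1 - (blockToeplitz f n n - z • 1) * blockToeplitz r n n) := by
      rw [mul_sub, mul_one, ← mul_assoc, (rs_spec (bt_herm hherm) hz).2.1, one_mul]; abel
    conv_lhs => rw [h1]
    rw [trace_add]
    congr 1
    rw [trace_blk]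
    refine Finset.sum_congr rfl fun b _ => Finset.sum_congr rfl fun a _ => ?_
    simp only [DF]
    rw [← trace_sum, ← Finset.mul_sum]
    congr 2
    ext i j
    rw [Matrix.sum_apply]
    exact err_entry hf hr hrM hfr (i, a) (j, b)
  have hlim : Tendsto (fun n : ℕ => ∑ b, ∑ a, ∑ c, (n : ℂ)⁻¹ * DF (blk (rs (blockToeplitz f n n) z) b a)
      (fun θ => f θ a c) (fun θ => r θ c b)) atTop (𝓝 0) := by
    have : (0 : ℂ) = ∑ b : Fin s, ∑ a : Fin s, ∑ c : Fin s, 0 := by simp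
    rw [this]
    refine tendsto_finsetSum _ fun b _ => tendsto_finsetSum _ fun a _ => tendsto_finsetSum _ fun c _ => ?_
    refine DF_tendsto _ (C := M) (fun n => ?_) (hfm a c) (hf a c) (hr c b) hM (fun θ => hrM θ c b)
    exact (blk_norm _ b a).trans (rs_spec (bt_herm hherm) hz).2.2.1
  have h2 := hlim.const_add (((2 * π : ℝ) : ℂ)⁻¹ * ∫ θ in (-π : ℝ)..π, (r θ).trace)
  rw [add_zero] at h2
  refine h2.congr' ?_
  filter_upwards [eventually_gt_atTop 0] with n hn
  have hn0 : (n : ℂ) ≠ 0 := by exact_mod_cast hn.ne'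
  rw [key, trace_bt fun a b => bdd_int (hr a b) fun θ => hrM θ a b]
  simp only [← Finset.mul_sum]
  field_simp

/-- Poisson kernel -/
def PK (ε x t : ℝ) : ℝ := π⁻¹ * ε * ((t - x) ^ 2 + ε ^ 2)⁻¹

lemma PK_int {ε : ℝ} (hε : 0 < ε) (x : ℝ) : Integrable (PK ε x) :=
  ProbabilityTheory.integrable_cauchyPDFReal x (γ := ⟨ε, hε.le⟩)

lemma PK_one {ε : ℝ} (hε : 0 < ε) (x : ℝ) : ∫ t, PK ε x t = 1 :=
  ProbabilityTheory.integral_cauchyPDFReal_eq_one x (γ := ⟨ε, hε.le⟩)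
    (by intro h; exact hε.ne' (congrArg NNReal.toReal h))

lemma PK_nonneg {ε : ℝ} (hε : 0 < ε) (x t : ℝ) : 0 ≤ PK ε x t := by
  unfold PK; positivity

lemma PK_le {ε : ℝ} (hε : 0 < ε) (x t : ℝ) : PK ε x t ≤ π⁻¹ * ε⁻¹ := by
  have h : ((t - x) ^ 2 + ε ^ 2)⁻¹ ≤ (ε ^ 2)⁻¹ := by
    gcongr; nlinarith [sq_nonneg (t - x)]
  calc PK ε x t ≤ π⁻¹ * ε * (ε ^ 2)⁻¹ := by unfold PK; gcongr
    _ = _ := by field_simp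

lemma PK_cont {ε : ℝ} (hε : 0 < ε) (x : ℝ) : Continuous (PK ε x) := by
  unfold PK
  refine Continuous.mul continuous_const (Continuous.inv₀ (by fun_prop) fun t => ?_)
  positivity

lemma PK_tail {ε δ : ℝ} (hε : 0 < ε) (hδ : 0 < δ) (x t : ℝ) (h : δ ≤ |t - x|) :
    PK ε x t ≤ ε * (1 + (δ ^ 2)⁻¹) * PK 1 x t := by
  have h2 : δ ^ 2 ≤ (t - x) ^ 2 := by
    rw [← sq_abs (t - x)]; gcongr
  have h3 : ((t - x) ^ 2 + ε ^ 2)⁻¹ ≤ (1 + (δ ^ 2)⁻¹) * ((t - x) ^ 2 + 1 ^ 2)⁻¹ := by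
    have hpos : 0 < (t - x) ^ 2 := lt_of_lt_of_le (by positivity) h2
    rw [← div_eq_mul_inv, le_div_iff₀ (by positivity), inv_mul_le_iff₀ (by positivity)]
    have : 1 ≤ (t - x) ^ 2 * (δ ^ 2)⁻¹ := by
      rw [← div_eq_mul_inv, one_le_div (by positivity)]; exact h2
    have h4 : 0 < (δ ^ 2)⁻¹ := by positivity
    nlinarith [sq_nonneg ε, mul_pos (pow_pos hε 2) h4]
  unfold PK
  calc _ ≤ π⁻¹ * ε * ((1 + (δ ^ 2)⁻¹) * ((t - x) ^ 2 + 1 ^ 2)⁻¹) := by gcongr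
    _ = _ := by ring

lemma poisson_approx {G : ℝ → ℂ} (hG : Continuous G) (hGc : HasCompactSupport G) {η : ℝ}
    (hη : 0 < η) : ∃ ε > 0, ∀ x, ‖(∫ t, G t * (PK ε x t : ℂ)) - G x‖ ≤ η := by
  obtain ⟨B, hB⟩ := hG.bounded_above_of_compact_support hGc
  have hB0 : 0 ≤ B := (norm_nonneg _).trans (hB 0)
  have huc := hGc.uniformContinuous_of_continuous hG
  rw [Metric.uniformContinuous_iff] at huc
  obtain ⟨δ, hδ, hd⟩ := huc (η / 2) (by positivity)
  set W : ℝ := 2 * B * (1 + (δ ^ 2)⁻¹) + 1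
  have hW : 0 < W := by positivity
  refine ⟨η / 2 / W, by positivity, fun x => ?_⟩
  set ε : ℝ := η / 2 / W with hεd
  have hε : 0 < ε := by positivity
  have hPc : Integrable fun t => (PK ε x t : ℂ) := (PK_int hε x).ofReal
  have h1 : (∫ t, G t * (PK ε x t : ℂ)) - G x = ∫ t, (G t - G x) * (PK ε x t : ℂ) := by
    simp only [sub_mul]
    rw [integral_sub, integral_const_mul, integral_complex_ofReal, PK_one hε]
    · simp
    · exact hPc.bdd_mul hG.aestronglyMeasurable (Eventually.of_forall hB)
    · exact hPc.const_mul _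
  rw [h1]
  have h2 : ∀ t, ‖(G t - G x) * (PK ε x t : ℂ)‖ ≤
      η / 2 * PK ε x t + 2 * B * (ε * (1 + (δ ^ 2)⁻¹)) * PK 1 x t := by
    intro t
    have hp := PK_nonneg hε x t
    have hp1 := PK_nonneg one_pos x t
    rw [norm_mul, Complex.norm_real, Real.norm_of_nonneg hp]
    by_cases h : δ ≤ |t - x|
    · have h3 := PK_tail hε hδ x t h
      have h4 : ‖G t - G x‖ ≤ 2 * B := (norm_sub_le _ _).trans (by linarith [hB t, hB x])
      have : ‖G t - G x‖ * PK ε x t ≤ 2 * B * (ε * (1 + (δ ^ 2)⁻¹) * PK 1 x t) := by gcongr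
      nlinarith [mul_nonneg hη.le hp]
    · have h3 := hd (a := t) (b := x) (by rw [Real.dist_eq]; linarith)
      rw [dist_eq_norm] at h3
      have h4 : ‖G t - G x‖ * PK ε x t ≤ η / 2 * PK ε x t := by gcongr
      have : 0 ≤ 2 * B * (ε * (1 + (δ ^ 2)⁻¹)) * PK 1 x t := by positivity
      linarith
  refine (norm_integral_le_of_norm_le (((PK_int hε x).const_mul _).add
    ((PK_int one_pos x).const_mul _)) (Eventually.of_forall h2)).trans ?_
  simp only [Pi.add_apply]
  rw [integral_add ((PK_int hε x).const_mul _) ((PK_int one_pos x).const_mul _),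
    integral_const_mul, integral_const_mul, PK_one hε, PK_one one_pos]
  have h5 : 2 * B * (ε * (1 + (δ ^ 2)⁻¹)) ≤ ε * W := by
    simp only [W]; nlinarith
  have h6 : ε * W = η / 2 := by rw [hεd]; field_simp
  linarith

/-- Poisson-smoothed spectral density -/
def Kt {ι : Type*} [Fintype ι] [DecidableEq ι] (ε : ℝ) (A : Matrix ι ι ℂ) (t : ℝ) : ℂ :=
  (2 * π * Complex.I)⁻¹ * ((rs A (t + ε * Complex.I)).trace - (rs A (t - ε * Complex.I)).trace)

lemma PK_eq {ε : ℝ} (hε : 0 < ε) (x t : ℝ) : (PK ε x t : ℂ) = (2 * π * Complex.I)⁻¹ *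
    (((x : ℂ) - (t + ε * Complex.I))⁻¹ - ((x : ℂ) - (t - ε * Complex.I))⁻¹) := by
  have h1 : (x : ℂ) - (t + ε * Complex.I) ≠ 0 := sub_ne (by simp [hε.ne']) x
  have h2 : (x : ℂ) - (t - ε * Complex.I) ≠ 0 := sub_ne (by simp [hε.ne']) x
  have hpi : (π : ℂ) ≠ 0 := by exact_mod_cast Real.pi_ne_zero
  have h3 : ((t : ℂ) - x) ^ 2 + ε ^ 2 = ((x : ℂ) - (t + ε * Complex.I)) * ((x : ℂ) - (t - ε * Complex.I)) := by
    ring_nf; rw [Complex.I_sq]; ring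
  rw [inv_sub_inv h1 h2]
  unfold PK
  push_cast
  rw [h3]
  field_simp
  ring

lemma Kt_eq {ι : Type*} [Fintype ι] [DecidableEq ι] {ε : ℝ} (hε : 0 < ε) {A : Matrix ι ι ℂ}
    (hA : A.IsHermitian) (t : ℝ) : Kt ε A t = ∑ i, (PK ε (hA.eigenvalues i) t : ℂ) := by
  rw [Kt, (rs_spec hA (by simp [hε.ne'])).2.2.2, (rs_spec hA (by simp [hε.ne'])).2.2.2,
    ← Finset.sum_sub_distrib, Finset.mul_sum]
  simp only [PK_eq hε]

lemma Kt_cont {ι : Type*} [Fintype ι] [DecidableEq ι] {ε : ℝ} (hε : 0 < ε) {A : Matrix ι ι ℂ}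
    (hA : A.IsHermitian) : Continuous (Kt ε A) := by
  have : Kt ε A = _ := funext (Kt_eq hε hA)
  rw [this]
  exact continuous_finsetSum _ fun i _ => Complex.continuous_ofReal.comp (PK_cont hε _)

lemma Kt_norm {ι : Type*} [Fintype ι] [DecidableEq ι] {ε : ℝ} (hε : 0 < ε) {A : Matrix ι ι ℂ}
    (hA : A.IsHermitian) (t : ℝ) : ‖Kt ε A t‖ ≤ Fintype.card ι * (π⁻¹ * ε⁻¹) := by
  rw [Kt_eq hε hA]
  refine (norm_sum_le _ _).trans ?_
  refine (Finset.sum_le_card_nsmul _ _ (π⁻¹ * ε⁻¹) ?_).trans ?_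
  · intro i _
    rw [Complex.norm_real, Real.norm_of_nonneg (PK_nonneg hε _ _)]
    exact PK_le hε _ _
  · rw [nsmul_eq_mul, Finset.card_univ]

lemma eig_approx {ι : Type*} [Fintype ι] [DecidableEq ι] {F : ℂ → ℂ} {G : ℝ → ℂ}
    (hFG : ∀ x : ℝ, F x = G x) (hG : Continuous G) (hGc : HasCompactSupport G) {ε η : ℝ} (hε : 0 < ε)
    (h : ∀ x, ‖(∫ t, G t * (PK ε x t : ℂ)) - G x‖ ≤ η) {A : Matrix ι ι ℂ}
    (hA : A.IsHermitian) :
    ‖(∫ t, G t * Kt ε A t) - eigSum F A‖ ≤ Fintype.card ι * η := by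
  have hGi : Integrable G := hG.integrable_of_hasCompactSupport hGc
  have h1 : ∫ t, G t * Kt ε A t = ∑ i, ∫ t, G t * (PK ε (hA.eigenvalues i) t : ℂ) := by
    rw [← integral_finsetSum]
    · simp only [Kt_eq hε hA, Finset.mul_sum]
    · intro i _
      refine hGi.mul_bdd (c := π⁻¹ * ε⁻¹)
        (Complex.continuous_ofReal.comp (PK_cont hε _)).aestronglyMeasurable (Eventually.of_forall fun t => ?_)
      rw [Complex.norm_real, Real.norm_of_nonneg (PK_nonneg hε _ _)]
      exact PK_le hε _ _
  rw [h1, eigSum_herm F hA, ← Finset.sum_sub_distrib]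
  refine (norm_sum_le _ _).trans ?_
  refine (Finset.sum_le_card_nsmul _ _ η ?_).trans ?_
  · intro i _
    rw [hFG]; exact h _
  · rw [nsmul_eq_mul, Finset.card_univ]

lemma rs_trace_meas {Ω : Type*} [MeasurableSpace Ω] {s : ℕ} {g : Ω → Matrix (Fin s) (Fin s) ℂ}
    (hg : ∀ a b, Measurable fun ω => g ω a b) {z : Ω → ℂ} (hz : Measurable z) :
    Measurable fun ω => (rs (g ω) (z ω)).trace := by
  simp only [Matrix.trace, Matrix.diag, rs]
  refine Finset.measurable_fun_sum _ fun i _ => ?_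
  refine meas_inv (g := fun ω => g ω - z ω • 1) (fun a b => ?_) i i
  simp only [Matrix.sub_apply, Matrix.smul_apply, smul_eq_mul]
  exact (hg a b).sub (hz.mul_const _)

lemma Kt_meas {Ω : Type*} [MeasurableSpace Ω] {s : ℕ} {g : Ω → Matrix (Fin s) (Fin s) ℂ}
    (hg : ∀ a b, Measurable fun ω => g ω a b) {u : Ω → ℝ} (hu : Measurable u) (ε : ℝ) :
    Measurable fun ω => Kt ε (g ω) (u ω) := by
  unfold Kt
  have h := Complex.measurable_ofReal.comp hu
  exact ((rs_trace_meas hg (h.add_const _)).sub (rs_trace_meas hg (h.sub_const _))).const_mul _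

lemma rs_trace_int {s : ℕ} {f : ℝ → Matrix (Fin s) (Fin s) ℂ}
    (hfm : ∀ a b, Measurable fun θ => f θ a b) (hherm : ∀ θ, (f θ).IsHermitian) {z : ℂ}
    (hz : z.im ≠ 0) :
    IntervalIntegrable (fun θ => (rs (f θ) z).trace) volume (-π) π := by
  refine bdd_int (M := s * |z.im|⁻¹) (rs_trace_meas hfm measurable_const) fun θ => ?_
  refine (norm_sum_le _ _).trans ?_
  refine (Finset.sum_le_card_nsmul _ _ (|z.im|⁻¹) ?_).trans ?_
  · intro i _
    exact (entry_le _ i i).trans (rs_spec (hherm θ) hz).2.2.1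
  · rw [nsmul_eq_mul, Finset.card_univ, Fintype.card_fin]

lemma Kt_limit (s : ℕ) {f : ℝ → Matrix (Fin s) (Fin s) ℂ}
    (hfm : ∀ a b, Measurable fun θ => f θ a b)
    (hf : ∀ i j, IntervalIntegrable (fun θ => f θ i j) volume (-π) π)
    (hherm : ∀ θ, (f θ).IsHermitian) {ε : ℝ} (hε : 0 < ε) (t : ℝ) :
    Tendsto (fun n : ℕ => (n : ℂ)⁻¹ * Kt ε (blockToeplitz f n n) t) atTop
      (𝓝 (((2 * π : ℝ) : ℂ)⁻¹ * ∫ θ in (-π : ℝ)..π, Kt ε (f θ) t)) := by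
  have hz1 : ((t : ℂ) + ε * Complex.I).im ≠ 0 := by simp [hε.ne']
  have hz2 : ((t : ℂ) - ε * Complex.I).im ≠ 0 := by simp [hε.ne']
  have h := ((resolvent_limit s hfm hf hherm hz1).sub
    (resolvent_limit s hfm hf hherm hz2)).const_mul ((2 * π * Complex.I)⁻¹ : ℂ)
  have e : (((2 * π : ℝ) : ℂ)⁻¹ * ∫ θ in (-π : ℝ)..π, Kt ε (f θ) t) = (2 * π * Complex.I)⁻¹ *
      (((2 * π : ℝ) : ℂ)⁻¹ * (∫ θ in (-π : ℝ)..π, (rs (f θ) (t + ε * Complex.I)).trace) -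
       ((2 * π : ℝ) : ℂ)⁻¹ * ∫ θ in (-π : ℝ)..π, (rs (f θ) (t - ε * Complex.I)).trace) := by
    simp only [Kt]
    rw [intervalIntegral.integral_const_mul, intervalIntegral.integral_sub
      (rs_trace_int hfm hherm hz1) (rs_trace_int hfm hherm hz2)]
    ring
  rw [e]
  refine h.congr fun n => ?_
  simp only [Kt]; ring

lemma smooth_limit (s : ℕ) {f : ℝ → Matrix (Fin s) (Fin s) ℂ}
    (hfm : ∀ a b, Measurable fun θ => f θ a b)
    (hf : ∀ i j, IntervalIntegrable (fun θ => f θ i j) volume (-π) π)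
    (hherm : ∀ θ, (f θ).IsHermitian) {ε : ℝ} (hε : 0 < ε) {G : ℝ → ℂ}
    (hG : Continuous G) (hGi : Integrable G) :
    Tendsto (fun n : ℕ => (n : ℂ)⁻¹ * ∫ t, G t * Kt ε (blockToeplitz f n n) t) atTop
      (𝓝 (((2 * π : ℝ) : ℂ)⁻¹ * ∫ θ in (-π : ℝ)..π, ∫ t, G t * Kt ε (f θ) t)) := by
  have hpi : (-π : ℝ) ≤ π := by linarith [Real.pi_pos]
  have h1 : Tendsto (fun n : ℕ => ∫ t, G t * ((n : ℂ)⁻¹ * Kt ε (blockToeplitz f n n) t)) atTop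
      (𝓝 (∫ t, G t * (((2 * π : ℝ) : ℂ)⁻¹ * ∫ θ in (-π : ℝ)..π, Kt ε (f θ) t))) := by
    refine tendsto_integral_of_dominated_convergence
      (fun t => ‖G t‖ * (s * (π⁻¹ * ε⁻¹))) (fun n => ?_) (hGi.norm.mul_const _) (fun n => ?_) ?_
    · exact (hG.mul (continuous_const.mul (Kt_cont hε (bt_herm hherm)))).aestronglyMeasurable
    · refine Eventually.of_forall fun t => ?_
      rw [norm_mul]
      gcongr
      rw [norm_mul, norm_inv, Complex.norm_natCast]
      rcases Nat.eq_zero_or_pos n with rfl | hn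
      · simp; positivity
      · rw [inv_mul_le_iff₀ (by exact_mod_cast hn)]
        refine (Kt_norm hε (bt_herm hherm) t).trans (le_of_eq ?_)
        simp; ring
    · exact Eventually.of_forall fun t => (Kt_limit s hfm hf hherm hε t).const_mul _
  have h2 : ∫ t, G t * (((2 * π : ℝ) : ℂ)⁻¹ * ∫ θ in (-π : ℝ)..π, Kt ε (f θ) t) =
      ((2 * π : ℝ) : ℂ)⁻¹ * ∫ θ in (-π : ℝ)..π, ∫ t, G t * Kt ε (f θ) t := by
    simp only [intervalIntegral.integral_of_le hpi]
    rw [integral_integral_swap]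
    · rw [← integral_const_mul]
      congr 1; funext t
      rw [integral_const_mul]; ring
    · have hm : Measurable fun p : ℝ × ℝ => G p.2 * Kt ε (f p.1) p.2 :=
        (hG.measurable.comp measurable_snd).mul
          (Kt_meas (g := fun p : ℝ × ℝ => f p.1) (fun a b => (hfm a b).comp measurable_fst)
            measurable_snd ε)
      refine Integrable.mono' (g := fun p : ℝ × ℝ => (s * (π⁻¹ * ε⁻¹)) * ‖G p.2‖) ?_
        hm.aestronglyMeasurable (Eventually.of_forall fun p => ?_)
      · exact (integrable_const (μ := volume.restrict (Set.Ioc (-π) π)) ((s : ℝ) * (π⁻¹ * ε⁻¹))).mul_prod hGi.norm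
      · simp only [Function.uncurry]
        rw [norm_mul, mul_comm]
        gcongr
        simpa using Kt_norm hε (hherm p.1) p.2
  rw [h2] at h1
  refine h1.congr fun n => ?_
  rw [← integral_const_mul]
  congr 1; funext t; ring

lemma smooth_meas {s : ℕ} {f : ℝ → Matrix (Fin s) (Fin s) ℂ}
    (hfm : ∀ a b, Measurable fun θ => f θ a b) (ε : ℝ) {G : ℝ → ℂ} (hG : Continuous G) :
    Measurable fun θ => ∫ t, G t * Kt ε (f θ) t := by
  have hm : Measurable fun p : ℝ × ℝ => G p.2 * Kt ε (f p.1) p.2 :=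
    (hG.measurable.comp measurable_snd).mul
      (Kt_meas (g := fun p : ℝ × ℝ => f p.1) (fun a b => (hfm a b).comp measurable_fst)
        measurable_snd ε)
  exact hm.stronglyMeasurable.integral_prod_right.measurable

lemma eigSum_meas {s : ℕ} {f : ℝ → Matrix (Fin s) (Fin s) ℂ}
    (hfm : ∀ a b, Measurable fun θ => f θ a b) (hherm : ∀ θ, (f θ).IsHermitian)
    {F : ℂ → ℂ} {G : ℝ → ℂ} (hFG : ∀ x : ℝ, F x = G x) (hG : Continuous G)
    (hGc : HasCompactSupport G) : Measurable fun θ => eigSum F (f θ) := by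
  have hη : ∀ m : ℕ, (0 : ℝ) < ((m : ℝ) + 1)⁻¹ := fun m => by positivity
  choose ε hε hp using fun m : ℕ => poisson_approx hG hGc (hη m)
  refine measurable_of_tendsto_metrizable (fun m => smooth_meas hfm (ε m) hG)
    (tendsto_pi_nhds.2 fun θ => ?_)
  rw [tendsto_iff_norm_sub_tendsto_zero]
  have h0 : Tendsto (fun m : ℕ => (s : ℝ) * ((m : ℝ) + 1)⁻¹) atTop (𝓝 0) := by
    have := (tendsto_one_div_add_atTop_nhds_zero_nat (𝕜 := ℝ)).const_mul (s : ℝ)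
    simpa using this
  refine squeeze_zero (fun _ => norm_nonneg _) (fun m => ?_) h0
  simpa using eig_approx hFG hG hGc (hε m) (hp m) (hherm θ)

lemma eigSum_int {s : ℕ} {f : ℝ → Matrix (Fin s) (Fin s) ℂ}
    (hfm : ∀ a b, Measurable fun θ => f θ a b) (hherm : ∀ θ, (f θ).IsHermitian)
    {F : ℂ → ℂ} {G : ℝ → ℂ} (hFG : ∀ x : ℝ, F x = G x) (hG : Continuous G)
    (hGc : HasCompactSupport G) :
    IntervalIntegrable (fun θ => eigSum F (f θ)) volume (-π) π := by
  obtain ⟨B, hB⟩ := hG.bounded_above_of_compact_support hGc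
  refine bdd_int (M := s * B) (eigSum_meas hfm hherm hFG hG hGc) fun θ => ?_
  rw [eigSum_herm F (hherm θ)]
  refine (norm_sum_le _ _).trans ?_
  refine (Finset.sum_le_card_nsmul _ _ B ?_).trans ?_
  · intro i _
    rw [hFG]; exact hB _
  · rw [nsmul_eq_mul, Finset.card_univ, Fintype.card_fin]

lemma smooth_int {s : ℕ} {f : ℝ → Matrix (Fin s) (Fin s) ℂ}
    (hfm : ∀ a b, Measurable fun θ => f θ a b) (hherm : ∀ θ, (f θ).IsHermitian)
    {ε : ℝ} (hε : 0 < ε) {G : ℝ → ℂ} (hG : Continuous G) (hGi : Integrable G) :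
    IntervalIntegrable (fun θ => ∫ t, G t * Kt ε (f θ) t) volume (-π) π := by
  refine bdd_int (M := ∫ t, ‖G t‖ * (s * (π⁻¹ * ε⁻¹))) (smooth_meas hfm ε hG) fun θ => ?_
  refine norm_integral_le_of_norm_le (hGi.norm.mul_const _) (Eventually.of_forall fun t => ?_)
  rw [norm_mul]
  gcongr
  simpa using Kt_norm hε (hherm θ) t

lemma eig_limit (s : ℕ) {f : ℝ → Matrix (Fin s) (Fin s) ℂ}
    (hfm : ∀ a b, Measurable fun θ => f θ a b)
    (hf : ∀ i j, IntervalIntegrable (fun θ => f θ i j) volume (-π) π)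
    (hherm : ∀ θ, (f θ).IsHermitian) {F : ℂ → ℂ} {G : ℝ → ℂ} (hFG : ∀ x : ℝ, F x = G x)
    (hG : Continuous G) (hGc : HasCompactSupport G) :
    Tendsto (fun n : ℕ => (n : ℂ)⁻¹ * eigSum F (blockToeplitz f n n)) atTop
      (𝓝 (((2 * π : ℝ) : ℂ)⁻¹ * ∫ θ in (-π : ℝ)..π, eigSum F (f θ))) := by
  have hGi : Integrable G := hG.integrable_of_hasCompactSupport hGc
  rw [Metric.tendsto_atTop]
  intro δ hδ
  set η : ℝ := δ / (3 * (s + 1)) with hηd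
  have hη : 0 < η := by positivity
  have hsη : s * η < δ / 3 := by
    rw [hηd, ← mul_div_assoc, div_lt_div_iff₀ (by positivity) (by norm_num)]
    nlinarith
  obtain ⟨ε, hε, hp⟩ := poisson_approx hG hGc hη
  obtain ⟨N, hN⟩ := Metric.tendsto_atTop.1 (smooth_limit s hfm hf hherm hε hG hGi) (δ / 3)
    (by positivity)
  refine ⟨N, fun n hn => ?_⟩
  have h1 := hN n hn
  have h2 : dist ((n : ℂ)⁻¹ * eigSum F (blockToeplitz f n n))
      ((n : ℂ)⁻¹ * ∫ t, G t * Kt ε (blockToeplitz f n n) t) ≤ s * η := by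
    rw [dist_comm, dist_eq_norm, ← mul_sub, norm_mul, norm_inv, Complex.norm_natCast]
    rcases Nat.eq_zero_or_pos n with rfl | hn
    · simp; positivity
    · rw [inv_mul_le_iff₀ (by exact_mod_cast hn)]
      refine (eig_approx hFG hG hGc hε hp (bt_herm hherm)).trans (le_of_eq ?_)
      simp; ring
  have h3 : dist (((2 * π : ℝ) : ℂ)⁻¹ * ∫ θ in (-π : ℝ)..π, ∫ t, G t * Kt ε (f θ) t)
      (((2 * π : ℝ) : ℂ)⁻¹ * ∫ θ in (-π : ℝ)..π, eigSum F (f θ)) ≤ s * η := by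
    rw [dist_eq_norm, ← mul_sub, ← intervalIntegral.integral_sub
      (smooth_int hfm hherm hε hG hGi) (eigSum_int hfm hherm hFG hG hGc), norm_mul]
    have := intervalIntegral.norm_integral_le_of_norm_le_const (a := -π) (b := π) (C := s * η)
      (f := fun θ => (∫ t, G t * Kt ε (f θ) t) - eigSum F (f θ)) (fun θ _ => by
        simpa using eig_approx hFG hG hGc hε hp (hherm θ))
    have e : |π - -π| = 2 * π := by
      rw [sub_neg_eq_add, ← two_mul, abs_of_pos (by positivity)]
    rw [e] at this
    rw [norm_inv, Complex.norm_real, Real.norm_of_nonneg (by positivity),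
      inv_mul_le_iff₀ (by positivity)]
    linarith
  calc _ ≤ _ := dist_triangle4 _ _ _ _
    _ < δ := by linarith [h1, h2, h3]

lemma toeplitz_main (s : ℕ) (f : ℝ → Matrix (Fin s) (Fin s) ℂ)
    (hf : ∀ i j, IntervalIntegrable (fun θ => f θ i j) volume (-π) π)
    (hherm : ∀ᵐ θ ∂(volume.restrict (Set.Icc (-π) π)), (f θ).IsHermitian)
    (F : ℂ → ℂ) (hF : Continuous F) (hFc : HasCompactSupport F) :
    Tendsto (fun n : ℕ => (n : ℂ)⁻¹ * eigSum F (blockToeplitz f n n)) atTop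
      (𝓝 (((2 * π : ℝ) : ℂ)⁻¹ * ∫ θ in (-π : ℝ)..π, eigSum F (f θ))) := by
  have hpi : (-π : ℝ) ≤ π := by linarith [Real.pi_pos]
  have hI : ∀ i j, Integrable (fun θ => f θ i j) (volume.restrict (Set.Ioc (-π) π)) :=
    fun i j => (intervalIntegrable_iff_integrableOn_Ioc_of_le hpi).1 (hf i j)
  let h : ℝ → Matrix (Fin s) (Fin s) ℂ := fun θ =>
    Matrix.of fun i j => (hI i j).aestronglyMeasurable.mk _ θ
  have hhm : ∀ i j, Measurable fun θ => h θ i j := fun i j =>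
    (hI i j).aestronglyMeasurable.stronglyMeasurable_mk.measurable
  let f' : ℝ → Matrix (Fin s) (Fin s) ℂ := fun θ => (1 / 2 : ℂ) • (h θ + (h θ)ᴴ)
  have hm' : ∀ a b, Measurable fun θ => f' θ a b := by
    intro a b
    simp only [f', Matrix.smul_apply, Matrix.add_apply, Matrix.conjTranspose_apply, smul_eq_mul]
    exact ((hhm a b).add (continuous_star.measurable.comp (hhm b a))).const_mul _
  have hherm' : ∀ θ, (f' θ).IsHermitian := by
    intro θ
    simp only [f', Matrix.IsHermitian, Matrix.conjTranspose_smul, Matrix.conjTranspose_add,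
      Matrix.conjTranspose_conjTranspose]
    rw [add_comm]
    congr 1
    simp
  have hae : ∀ᵐ θ ∂(volume.restrict (Set.Ioc (-π) π)), f θ = f' θ := by
    have h1 : ∀ᵐ θ ∂(volume.restrict (Set.Ioc (-π) π)), ∀ i j, f θ i j = h θ i j :=
      ae_all_iff.2 fun i => ae_all_iff.2 fun j => (hI i j).aestronglyMeasurable.ae_eq_mk
    have h2 : ∀ᵐ θ ∂(volume.restrict (Set.Ioc (-π) π)), (f θ).IsHermitian :=
      ae_restrict_of_ae_restrict_of_subset Set.Ioc_subset_Icc_self hherm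
    filter_upwards [h1, h2] with θ h1 h2
    have e : h θ = f θ := by ext i j; exact (h1 i j).symm
    simp only [f', e, h2.eq]
    rw [← two_smul ℂ (f θ), smul_smul]; norm_num
  have hf' : ∀ i j, IntervalIntegrable (fun θ => f' θ i j) volume (-π) π := fun i j =>
    (intervalIntegrable_iff_integrableOn_Ioc_of_le hpi).2
      ((hI i j).congr (hae.mono fun θ hθ => by simp only [hθ]))
  have hT : ∀ n, blockToeplitz f n n = blockToeplitz f' n n := by
    intro n
    ext p q
    simp only [blockToeplitz, fCoeff, Matrix.of_apply, intervalIntegral.integral_of_le hpi]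
    congr 1
    exact integral_congr_ae (hae.mono fun θ hθ => by simp only [hθ])
  have hE : ∫ θ in (-π : ℝ)..π, eigSum F (f θ) = ∫ θ in (-π : ℝ)..π, eigSum F (f' θ) := by
    simp only [intervalIntegral.integral_of_le hpi]
    exact integral_congr_ae (hae.mono fun θ hθ => by simp only [hθ])
  simp only [hT, hE]
  exact eig_limit s hm' hf' hherm' (G := fun x : ℝ => F x) (fun _ => rfl)
    (hF.comp Complex.continuous_ofReal)
    (hFc.comp_isClosedEmbedding Complex.isometry_ofReal.isClosedEmbedding)

end helpers

/-- Szegő-type eigenvalue distribution for block Toeplitz matrices: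
if `f ∈ L¹([-π,π]; ℂ^{s×s})` is Hermitian-valued for almost every `θ`, then
`{T_n(f)}_n ∼_λ f`. -/
theorem toeplitz_eig_distribution
    (s : ℕ) (f : ℝ → Matrix (Fin s) (Fin s) ℂ)
    (hf : ∀ i j, IntervalIntegrable (fun θ => f θ i j) volume (-π) π)
    (hherm : ∀ᵐ θ ∂(volume.restrict (Set.Icc (-π) π)), (f θ).IsHermitian) :
    DistributedEig (Set.Icc (-π) π) f (fun n => blockToeplitz f n n) := by
  intro F hF hFc
  have hpi : (-π : ℝ) ≤ π := by linarith [Real.pi_pos]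
  have h := (toeplitz_main s f hf hherm F hF hFc).const_mul ((s : ℂ)⁻¹)
  have e : (((volume (Set.Icc (-π) π)).toReal : ℝ) : ℂ)⁻¹ *
      ∫ θ in Set.Icc (-π) π, ((Fintype.card (Fin s) : ℕ) : ℂ)⁻¹ * eigSum F (f θ) =
      (s : ℂ)⁻¹ * (((2 * π : ℝ) : ℂ)⁻¹ * ∫ θ in (-π : ℝ)..π, eigSum F (f θ)) := by
    have hv : (volume (Set.Icc (-π) π)).toReal = 2 * π := by
      rw [Real.volume_Icc, ENNReal.toReal_ofReal (by linarith)]; ring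
    rw [hv, integral_const_mul, integral_Icc_eq_integral_Ioc,
      intervalIntegral.integral_of_le hpi, Fintype.card_fin]
    ring
  rw [e]
  refine h.congr fun n => ?_
  rw [Fintype.card_prod, Fintype.card_fin, Fintype.card_fin]
  push_cast
  rw [mul_inv]; ring

end
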